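/- Let n ≥ 4 and let ω₁ be the largest zero of T_n''. Then for every x ∈ [0, ω₁], m_1(x, σ_n) ≤ (1/2)·T_n'(1); that is, every f : ℝ → ℝ that is n times differentiable on [-1,1] with |f| ≤ 1 and |f^{(n)}| ≤ σ_n on [-1,1] satisfies |f'(x)| ≤ (1/2)·T_n'(1) for all x ∈ [0, ω₁]. -/

import Mathlib

open Polynomial Set

/-- `k`-th derivative of the Chebyshev polynomial `T_m`, evaluated at `x`. -/
noncomputable def chebDeriv (m : ℤ) (k : ℕ) (x : ℝ) : ℝ :=
  (derivative^[k] (Polynomial.Chebyshev.T ℝ m)).eval x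

/-- `σ_n = 2^(n-1) n! = T_n^{(n)}(1)`. -/
noncomputable def sigmaN (n : ℕ) : ℝ := 2 ^ (n - 1) * (n.factorial : ℝ)

/-- `f` is `n` times differentiable on the set `s`. -/
def NTimesDiffOn (n : ℕ) (f : ℝ → ℝ) (s : Set ℝ) : Prop :=
  ∀ i < n, DifferentiableOn ℝ (iteratedDerivWithin i f s) s

/-- The class `W^n_∞(σ)` on `[-1,1]`. -/
def memW (n : ℕ) (σ : ℝ) (f : ℝ → ℝ) : Prop :=
  NTimesDiffOn n f (Icc (-1:ℝ) 1) ∧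
  (∀ x ∈ Icc (-1:ℝ) 1, |f x| ≤ 1) ∧
  (∀ x ∈ Icc (-1:ℝ) 1, |iteratedDerivWithin n f (Icc (-1:ℝ) 1) x| ≤ σ)

/-- `m_k(x,σ) = sup { |f^{(k)}(x)| : f ∈ W^n_∞(σ) }`. -/
noncomputable def mval (n k : ℕ) (x σ : ℝ) : ℝ :=
  sSup {y | ∃ f : ℝ → ℝ, memW n σ f ∧
    y = |iteratedDerivWithin k f (Icc (-1:ℝ) 1) x|}

/-- `m_k^*(x,σ) = sup { |f^{(k)}(x)| : f ∈ W^n_∞(σ), f^{(k+1)}(x) = 0 }`. -/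
noncomputable def mstar (n k : ℕ) (x σ : ℝ) : ℝ :=
  sSup {y | ∃ f : ℝ → ℝ, memW n σ f ∧
    iteratedDerivWithin (k+1) f (Icc (-1:ℝ) 1) x = 0 ∧
    y = |iteratedDerivWithin k f (Icc (-1:ℝ) 1) x|}

/-- `μ_k(x₀)`: best constant in the pointwise Markov inequality. -/
noncomputable def muk (n k : ℕ) (x : ℝ) : ℝ :=
  sSup {y | ∃ p : Polynomial ℝ, p.natDegree ≤ n ∧
    (∀ t ∈ Icc (-1:ℝ) 1, |p.eval t| ≤ 1) ∧
    y = |(derivative^[k] p).eval x|}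

/-- `μ_k^*(x₀)`: best constant in the pointwise Schur-type inequality. -/
noncomputable def mukStar (n k : ℕ) (x : ℝ) : ℝ :=
  sSup {y | ∃ p : Polynomial ℝ, p.natDegree ≤ n ∧
    (∀ t ∈ Icc (-1:ℝ) 1, |p.eval t| ≤ 1) ∧
    (derivative^[k+1] p).eval x = 0 ∧
    y = |(derivative^[k] p).eval x|}

/- Let `N` be the nodal polynomial of `Z` and `w` a zero of `N'`. Differentiating the Lagrange
interpolant of `F` with its remainder gives
`F'(w) = -∑_{z ∈ Z} F(z) N(w) / (N'(z) (w - z)²) + F^{(|Z|+1)}(ξ) / (|Z|+1)! · N(w)`,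
so `N(w) F'(w) ≥ 0` as soon as `N'(z) F(z) ≤ 0` at the nodes and `F^{(|Z|+1)} ≥ 0`. Take for `Z` the
zeros of `T_n'`, where `T_n = ±1` has the sign opposite to `T_n''`, and `F = T_n ± f`: this yields
`|f'(w)| ≤ |T_n'(w)|` at the zeros `w` of `T_n''`. The affine contraction of `[-1, 1]` that fixes
`-1` and moves `w` to `x ≤ w` turns it into `(1 + x) |f'(x)| ≤ (1 + w) |T_n'(w)|`. Finally,
for `w = cos θ`, the equation `cos θ sin nθ = n sin θ cos nθ` with `nθ ≥ π` forces `nθ ≥ 4`, which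
makes the right-hand side at most `n² / 2 = T_n'(1) / 2`. -/

/-- `F 0, F 1, …, F n` are successive derivatives on `s`. As for an `n` times differentiable
function, the last one need not be continuous, which is why `HasFTaylorSeriesUpToOn` does not
fit. -/
def IsDerivChainOn (n : ℕ) (F : ℕ → ℝ → ℝ) (s : Set ℝ) : Prop :=
  ∀ i < n, ∀ t ∈ s, HasDerivWithinAt (F i) (F (i + 1) t) s t

theorem exists_finset_deriv_eq_zero {s : Set ℝ} [s.OrdConnected] {g g' : ℝ → ℝ}
    (hg : ∀ t ∈ s, HasDerivWithinAt g (g' t) s t) {Z : Finset ℝ} (hZs : (Z : Set ℝ) ⊆ s)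
    (hZ : ∀ z ∈ Z, g z = 0) :
    ∃ Z' : Finset ℝ, (Z' : Set ℝ) ⊆ s ∧ Disjoint Z' Z ∧ (∀ z ∈ Z', g' z = 0) ∧
      Z.card ≤ Z'.card + 1 := by
  have rolle : ∀ p ∈ Z.offDiag.filter fun p => p.1 < p.2,
      ∃ c ∈ Ioo p.1 p.2, c ∈ s ∧ g' c = 0 := by
    rintro ⟨x, y⟩ hp
    obtain ⟨⟨hx, hy, -⟩, hxy⟩ := by simpa only [Finset.mem_filter, Finset.mem_offDiag] using hp
    have hs : Icc x y ⊆ s := Set.Icc_subset s (hZs hx) (hZs hy)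
    have hg' : ∀ t ∈ Icc x y, HasDerivWithinAt g (g' t) (Icc x y) t := fun t ht =>
      (hg t (hs ht)).mono hs
    obtain ⟨c, hc, hc0⟩ := exists_hasDerivAt_eq_zero hxy
      (fun t ht => (hg' t ht).continuousWithinAt) ((hZ x hx).trans (hZ y hy).symm)
      fun t ht => (hg' t (Ioo_subset_Icc_self ht)).hasDerivAt (Icc_mem_nhds ht.1 ht.2)
    exact ⟨c, hc, hs (Ioo_subset_Icc_self hc), hc0⟩
  choose! c hc hcs hc0 using rolle
  refine ⟨(Z.offDiag.filter fun p => p.1 < p.2).image c \ Z, ?_, Finset.sdiff_disjoint, ?_,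
    Finset.card_le_sdiff_of_interleaved fun x hx y hy hxy _ => ?_⟩
  · intro z hz
    obtain ⟨p, hp, rfl⟩ := Finset.mem_image.mp (Finset.mem_sdiff.mp hz).1
    exact hcs p hp
  · intro z hz
    obtain ⟨p, hp, rfl⟩ := Finset.mem_image.mp (Finset.mem_sdiff.mp hz).1
    exact hc0 p hp
  · have hp : (x, y) ∈ Z.offDiag.filter fun p => p.1 < p.2 := by
      simp only [Finset.mem_filter, Finset.mem_offDiag]
      exact ⟨⟨hx, hy, hxy.ne⟩, hxy⟩
    exact ⟨c (x, y), Finset.mem_image_of_mem c hp, hc _ hp⟩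

namespace IsDerivChainOn

variable {n : ℕ} {F G : ℕ → ℝ → ℝ} {s : Set ℝ}

theorem add (hF : IsDerivChainOn n F s) (hG : IsDerivChainOn n G s) :
    IsDerivChainOn n (F + G) s := fun i hi t ht => (hF i hi t ht).add (hG i hi t ht)

theorem sub (hF : IsDerivChainOn n F s) (hG : IsDerivChainOn n G s) :
    IsDerivChainOn n (F - G) s := fun i hi t ht => (hF i hi t ht).sub (hG i hi t ht)

theorem tail (hF : IsDerivChainOn (n + 1) F s) : IsDerivChainOn n (fun i => F (i + 1)) s :=
  fun i hi => hF (i + 1) (Nat.add_lt_add_right hi 1)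

theorem comp_affine {t : Set ℝ} {a b : ℝ} (hF : IsDerivChainOn n F t)
    (hst : MapsTo (fun x => a * x + b) s t) :
    IsDerivChainOn n (fun i x => a ^ i * F i (a * x + b)) s := fun i hi x hx => by
  have hlin : HasDerivWithinAt (fun x => a * x + b) a s x := by
    simpa only [mul_one] using (((hasDerivAt_id' x).const_mul a).add_const b).hasDerivWithinAt
  have h := ((hF i hi _ (hst hx)).comp x hlin hst).const_mul (a ^ i)
  rwa [show a ^ i * (F (i + 1) (a * x + b) * a) = a ^ (i + 1) * F (i + 1) (a * x + b) by ring]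
    at h

theorem eval_iterate_derivative (n : ℕ) (p : ℝ[X]) (s : Set ℝ) :
    IsDerivChainOn n (fun i t => (derivative^[i] p).eval t) s := fun i _ t _ => by
  simpa only [Function.iterate_succ_apply'] using (derivative^[i] p).hasDerivWithinAt t s

theorem exists_eq_zero [s.OrdConnected] (hF : IsDerivChainOn n F s) {Z : Finset ℝ}
    (hZs : (Z : Set ℝ) ⊆ s) (hZ : ∀ z ∈ Z, F 0 z = 0) (hn : n < Z.card) :
    ∃ ξ ∈ s, F n ξ = 0 := by
  induction n generalizing F Z with
  | zero =>
    obtain ⟨z, hz⟩ := Finset.card_pos.mp hn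
    exact ⟨z, hZs hz, hZ z hz⟩
  | succ n ih =>
    obtain ⟨Z', hZ's, -, hZ', hcard⟩ :=
      exists_finset_deriv_eq_zero (hF 0 n.succ_pos) hZs hZ
    exact ih hF.tail hZ's hZ' (by lia)

theorem exists_eq_zero_of_double_zero [s.OrdConnected] (hF : IsDerivChainOn (n + 1) F s)
    {Z : Finset ℝ} (hZs : (Z : Set ℝ) ⊆ s) (hZ : ∀ z ∈ Z, F 0 z = 0) {w : ℝ} (hw : w ∈ Z)
    (hw' : F 1 w = 0) (hn : n < Z.card) : ∃ ξ ∈ s, F (n + 1) ξ = 0 := by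
  obtain ⟨Z', hZ's, hdisj, hZ', hcard⟩ :=
    exists_finset_deriv_eq_zero (hF 0 n.succ_pos) hZs hZ
  refine hF.tail.exists_eq_zero (Z := insert w Z') ?_ ?_ ?_
  · rw [Finset.coe_insert]
    exact insert_subset (hZs hw) hZ's
  · exact (Finset.forall_mem_insert ..).mpr ⟨hw', hZ'⟩
  · rw [Finset.card_insert_of_notMem fun h => Finset.disjoint_left.mp hdisj h hw]
    lia

end IsDerivChainOn

theorem eval_iterate_derivative_of_natDegree_le {R : Type*} [CommRing R] {n : ℕ} {p : R[X]}
    (hp : p.natDegree ≤ n) (t : R) :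
    (derivative^[n] p).eval t = n.factorial * p.coeff n := by
  have hdeg : (derivative^[n] p).natDegree = 0 :=
    Nat.eq_zero_of_le_zero ((natDegree_iterate_derivative p n).trans (by lia))
  rw [eq_C_of_natDegree_eq_zero hdeg, eval_C, coeff_iterate_derivative, zero_add,
    Nat.descFactorial_self, nsmul_eq_mul]

section Nodal

variable {K : Type*} [Field K] {Z : Finset K} {z w : K}

theorem eval_derivative_nodal_ne_zero (hz : z ∈ Z) :
    (derivative (Lagrange.nodal Z id)).eval z ≠ 0 := by
  classical
  have h := Lagrange.nodalWeight_ne_zero (Set.injOn_id (Z : Set K)) hz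
  rw [Lagrange.nodalWeight_eq_eval_derivative_nodal hz] at h
  exact inv_eq_zero.not.mp h

theorem notMem_of_eval_derivative_nodal_eq_zero
    (hw : (derivative (Lagrange.nodal Z id)).eval w = 0) : w ∉ Z :=
  fun hwZ => eval_derivative_nodal_ne_zero hwZ hw

theorem eval_nodal_ne_zero_of_notMem (hw : w ∉ Z) : (Lagrange.nodal Z id).eval w ≠ 0 :=
  Lagrange.eval_nodal_not_at_node fun _ hz hwz => hw (hwz ▸ hz)

theorem eval_derivative_basis_of_eval_derivative_nodal_eq_zero [DecidableEq K]
    (hw : (derivative (Lagrange.nodal Z id)).eval w = 0) (hz : z ∈ Z) :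
    (derivative (Lagrange.basis Z id z)).eval w =
      -((Lagrange.nodal Z id).eval w /
        ((derivative (Lagrange.nodal Z id)).eval z * (w - z) ^ 2)) := by
  have hwz : w - z ≠ 0 := sub_ne_zero.mpr fun h => eval_derivative_nodal_ne_zero hz (h ▸ hw)
  have hN := eval_derivative_nodal_ne_zero hz
  have hbasis : (X - C z) * Lagrange.basis Z id z =
      C ((derivative (Lagrange.nodal Z id)).eval z)⁻¹ * Lagrange.nodal Z id := by
    rw [Lagrange.basis_eq_prod_sub_inv_mul_nodal_div hz,
      Lagrange.nodalWeight_eq_eval_derivative_nodal hz, ← Lagrange.nodal_erase_eq_nodal_div hz,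
      Lagrange.nodal_eq_mul_nodal_erase hz, mul_left_comm]
    rfl
  have hval := congrArg (eval w) hbasis
  have hder := congrArg (fun p => (derivative p).eval w) hbasis
  simp only [derivative_mul, derivative_X_sub_C, derivative_C, eval_add, eval_mul, eval_sub, eval_X,
    eval_C, one_mul, zero_mul, zero_add, hw, mul_zero] at hval hder
  field_simp at hval ⊢
  linear_combination ((derivative (Lagrange.nodal Z id)).eval z) * (w - z) * hder - hval

end Nodal

theorem eval_derivative_nodal_pos {R : Type*} [CommRing R] [LinearOrder R] [IsStrictOrderedRing R]
    {Z : Finset R} {w : R} (hZ : Z.Nonempty) (hw : ∀ z ∈ Z, z < w) :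
    0 < (derivative (Lagrange.nodal Z id)).eval w := by
  rw [Lagrange.derivative_nodal, eval_finsetSum]
  refine Finset.sum_pos (fun z _ => ?_) hZ
  rw [Lagrange.eval_nodal]
  exact Finset.prod_pos fun y hy => sub_pos.mpr (hw y (Finset.mem_of_mem_erase hy))

theorem exists_polynomial_hermite {K : Type*} [Field K] [DecidableEq K] {Z : Finset K}
    {w : K} (hw : (derivative (Lagrange.nodal Z id)).eval w = 0) (f : K → K) (f' : K) :
    ∃ Q : K[X], Q.natDegree ≤ Z.card + 1 ∧ (∀ z ∈ insert w Z, Q.eval z = f z) ∧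
      (derivative Q).eval w = f' ∧
      f' = (derivative (Lagrange.interpolate Z id f)).eval w +
        Q.coeff (Z.card + 1) * (Lagrange.nodal Z id).eval w := by
  set N := Lagrange.nodal Z id
  set P := Lagrange.interpolate Z id f
  have hN : N.natDegree = Z.card := Lagrange.natDegree_nodal
  have hP : P.natDegree ≤ Z.card :=
    natDegree_le_of_degree_le (Lagrange.degree_interpolate_lt f (Set.injOn_id _)).le
  have hNw : N.eval w ≠ 0 :=
    eval_nodal_ne_zero_of_notMem (notMem_of_eval_derivative_nodal_eq_zero hw)
  set d := (f' - (derivative P).eval w) / N.eval w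
  set c := (f w - P.eval w) / N.eval w - d * w with hc
  have hd' : d * N.eval w = f' - (derivative P).eval w := div_mul_cancel₀ _ hNw
  -- Since `N'(w) = 0`, the slope at `w` depends on `d` only; `c` then adjusts the value there.
  refine ⟨P + (C c + C d * X) * N, ?_, ?_, ?_, ?_⟩
  · have hlin : (C c + C d * X).natDegree ≤ 1 := by compute_degree
    have hmul := natDegree_mul_le_of_le hlin hN.le
    exact natDegree_add_le_of_degree_le (hP.trans (Nat.le_succ _)) (hmul.trans_eq (add_comm _ _))
  · refine (Finset.forall_mem_insert ..).mpr ⟨?_, fun z hz => ?_⟩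
    · simp only [eval_add, eval_mul, eval_C, eval_X, hc]
      field_simp
      ring
    · have hNz : N.eval z = 0 := Lagrange.eval_nodal_at_node (v := id) hz
      have hPz : P.eval z = f z := Lagrange.eval_interpolate_at_node f (Set.injOn_id _) hz
      simp only [eval_add, eval_mul, hNz, hPz, mul_zero, add_zero]
  · simp only [derivative_add, derivative_mul, derivative_C, derivative_X, eval_add, eval_mul,
      eval_C, eval_X, eval_zero, eval_one, hw, N]
    linear_combination hd'
  · have hcoeff : (P + (C c + C d * X) * N).coeff (Z.card + 1) = d := by
      rw [coeff_add, coeff_eq_zero_of_natDegree_lt (Nat.lt_succ_of_le hP), add_mul, mul_assoc,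
        coeff_add, coeff_C_mul, coeff_C_mul, coeff_X_mul,
        coeff_eq_zero_of_natDegree_lt (hN.trans_lt (Nat.lt_succ_self _)), ← hN,
        Lagrange.nodal_monic.coeff_natDegree]
      ring
    rw [hcoeff, hd']
    ring

theorem IsDerivChainOn.exists_eq_eval_derivative_interpolate_add {s : Set ℝ} [s.OrdConnected]
    {Z : Finset ℝ} (hZ : (Z : Set ℝ) ⊆ s) {F : ℕ → ℝ → ℝ} (hF : IsDerivChainOn (Z.card + 1) F s)
    {w : ℝ} (hws : w ∈ s) (hw : (derivative (Lagrange.nodal Z id)).eval w = 0) :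
    ∃ ξ ∈ s, F 1 w = (derivative (Lagrange.interpolate Z id (F 0))).eval w +
      F (Z.card + 1) ξ / (Z.card + 1).factorial * (Lagrange.nodal Z id).eval w := by
  obtain ⟨Q, hdeg, hQ, hQ', hcoeff⟩ := exists_polynomial_hermite hw (F 0) (F 1 w)
  obtain ⟨ξ, hξ, hzero⟩ :=
    (hF.sub (.eval_iterate_derivative _ Q s)).exists_eq_zero_of_double_zero
      (Z := insert w Z) (by rw [Finset.coe_insert]; exact insert_subset hws hZ)
      (fun z hz => sub_eq_zero.mpr (hQ z hz).symm) (Finset.mem_insert_self w Z)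
      (sub_eq_zero.mpr hQ'.symm) (by
        rw [Finset.card_insert_of_notMem (notMem_of_eval_derivative_nodal_eq_zero hw)]; lia)
  have hξQ : F (Z.card + 1) ξ = (Z.card + 1).factorial * Q.coeff (Z.card + 1) :=
    (sub_eq_zero.mp hzero).trans (eval_iterate_derivative_of_natDegree_le hdeg ξ)
  exact ⟨ξ, hξ, by rw [hξQ, mul_div_cancel_left₀ _ (by positivity)]; exact hcoeff⟩

theorem IsDerivChainOn.eval_nodal_mul_nonneg {s : Set ℝ} [s.OrdConnected] {Z : Finset ℝ}
    (hZ : (Z : Set ℝ) ⊆ s) {F : ℕ → ℝ → ℝ} (hF : IsDerivChainOn (Z.card + 1) F s)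
    (hF₀ : ∀ z ∈ Z, (derivative (Lagrange.nodal Z id)).eval z * F 0 z ≤ 0)
    (hFn : ∀ t ∈ s, 0 ≤ F (Z.card + 1) t)
    {w : ℝ} (hws : w ∈ s) (hw : (derivative (Lagrange.nodal Z id)).eval w = 0) :
    0 ≤ (Lagrange.nodal Z id).eval w * F 1 w := by
  obtain ⟨ξ, hξ, hF₁⟩ := hF.exists_eq_eval_derivative_interpolate_add hZ hws hw
  set N := Lagrange.nodal Z id
  have hterm : ∀ z ∈ Z, 0 ≤ N.eval w * (F 0 z * (derivative (Lagrange.basis Z id z)).eval w) :=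
    fun z hz => by
      have hd : (derivative N).eval z ≠ 0 := eval_derivative_nodal_ne_zero hz
      have hwz : w - z ≠ 0 := sub_ne_zero.mpr fun h => hd (h ▸ hw)
      have hbasis : (derivative (Lagrange.basis Z id z)).eval w =
          -(N.eval w / ((derivative N).eval z * (w - z) ^ 2)) :=
        eval_derivative_basis_of_eval_derivative_nodal_eq_zero hw hz
      calc 0 ≤ -((derivative N).eval z * F 0 z) *
            (N.eval w / ((derivative N).eval z * (w - z))) ^ 2 :=
            mul_nonneg (neg_nonneg.mpr (hF₀ z hz)) (sq_nonneg _)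
        _ = _ := by
            rw [hbasis]
            field_simp
  have hsum : N.eval w * F 1 w =
      ∑ z ∈ Z, N.eval w * (F 0 z * (derivative (Lagrange.basis Z id z)).eval w) +
        F (Z.card + 1) ξ / (Z.card + 1).factorial * N.eval w ^ 2 := by
    rw [hF₁, Lagrange.interpolate_apply, derivative_sum, eval_finsetSum, ← Finset.mul_sum]
    simp only [derivative_C_mul, eval_mul, eval_C]
    ring
  rw [hsum]
  exact add_nonneg (Finset.sum_nonneg hterm)
    (mul_nonneg (div_nonneg (hFn ξ hξ) (Nat.cast_nonneg _)) (sq_nonneg _))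

theorem IsDerivChainOn.abs_le_abs_of_dominated {s : Set ℝ} [s.OrdConnected] {Z : Finset ℝ}
    (hZ : (Z : Set ℝ) ⊆ s) {F G : ℕ → ℝ → ℝ} (hF : IsDerivChainOn (Z.card + 1) F s)
    (hG : IsDerivChainOn (Z.card + 1) G s)
    (h₀ : ∀ z ∈ Z, |(derivative (Lagrange.nodal Z id)).eval z * F 0 z| ≤
      -((derivative (Lagrange.nodal Z id)).eval z * G 0 z))
    (hn : ∀ t ∈ s, |F (Z.card + 1) t| ≤ G (Z.card + 1) t)
    {w : ℝ} (hws : w ∈ s) (hw : (derivative (Lagrange.nodal Z id)).eval w = 0) :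
    |F 1 w| ≤ |G 1 w| := by
  have hadd := (hG.add hF).eval_nodal_mul_nonneg hZ
    (fun z hz => by have := (abs_le.mp (h₀ z hz)).2; simp only [Pi.add_apply]; linarith)
    (fun t ht => by have := (abs_le.mp (hn t ht)).1; simp only [Pi.add_apply]; linarith) hws hw
  have hsub := (hG.sub hF).eval_nodal_mul_nonneg hZ
    (fun z hz => by have := (abs_le.mp (h₀ z hz)).1; simp only [Pi.sub_apply]; linarith)
    (fun t ht => by have := (abs_le.mp (hn t ht)).2; simp only [Pi.sub_apply]; linarith) hws hw
  have hNw := eval_nodal_ne_zero_of_notMem (notMem_of_eval_derivative_nodal_eq_zero hw)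
  simp only [Pi.add_apply, Pi.sub_apply, mul_add, mul_sub] at hadd hsub
  refine le_of_mul_le_mul_left ?_ (abs_pos.mpr hNw)
  rw [← abs_mul, ← abs_mul]
  exact (abs_le.mpr ⟨by linarith, by linarith⟩).trans (le_abs_self _)

theorem chebDeriv_ode (m : ℤ) (t : ℝ) :
    (1 - t ^ 2) * chebDeriv m 2 t = t * chebDeriv m 1 t - m ^ 2 * chebDeriv m 0 t := by
  simpa [chebDeriv] using Chebyshev.one_sub_X_sq_mul_iterate_derivative_T_eval m 0 t

theorem chebDeriv_pell (m : ℤ) (t : ℝ) :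
    (1 - t ^ 2) * chebDeriv m 1 t ^ 2 = m ^ 2 * (1 - chebDeriv m 0 t ^ 2) := by
  set T := Chebyshev.T ℝ m
  set p := (1 - X * X) * (derivative T * derivative T) + (↑(m ^ 2) : ℝ[X]) * (T * T) with hp
  have hp' : derivative p = 0 := by
    have hode : (1 - X ^ 2) * derivative (derivative T) = X * derivative T - (m : ℝ[X]) ^ 2 * T :=
      Chebyshev.one_sub_X_sq_mul_derivative_derivative_T_eq_poly_in_T m
    simp only [hp, derivative_add, derivative_mul, derivative_sub, derivative_one, derivative_X,
      derivative_intCast]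
    push_cast
    linear_combination 2 * derivative T * hode
  have hconst : p.eval t = p.eval 1 := by
    rw [eq_C_of_derivative_eq_zero hp', eval_C, eval_C]
  have hT : T.eval 1 = 1 := Chebyshev.T_eval_one ℝ m
  simp only [hp, eval_add, eval_mul, eval_sub, eval_one, eval_X, eval_intCast, hT] at hconst
  simp only [chebDeriv, Function.iterate_one, Function.iterate_zero, id]
  push_cast at hconst
  linear_combination hconst

theorem chebDeriv_one_one (m : ℤ) : chebDeriv m 1 1 = m ^ 2 :=
  mod_cast Chebyshev.derivative_T_eval_one (R := ℝ) m

theorem chebDeriv_self (n : ℕ) (t : ℝ) : chebDeriv n n t = sigmaN n := by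
  have hdeg : (Chebyshev.T ℝ n).natDegree = n := Chebyshev.natDegree_T ℝ n
  have hlead : (Chebyshev.T ℝ n).coeff n = 2 ^ (n - 1) := by
    simpa only [leadingCoeff, hdeg, Int.natAbs_natCast] using Chebyshev.leadingCoeff_T ℝ n
  rw [chebDeriv, eval_iterate_derivative_of_natDegree_le hdeg.le, hlead, sigmaN, mul_comm]

theorem isDerivChainOn_chebDeriv (n : ℕ) (m : ℤ) (s : Set ℝ) :
    IsDerivChainOn n (chebDeriv m) s := .eval_iterate_derivative n (Chebyshev.T ℝ m) s

/-- The zeros of `T_n'`, that is, the critical points of `T_n`. -/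
noncomputable def chebCritical (n : ℕ) : Finset ℝ :=
  (Finset.range (n - 1)).image fun k : ℕ => Real.cos ((k + 1) * Real.pi / n)

theorem card_chebCritical {n : ℕ} (hn : n ≠ 0) : (chebCritical n).card + 1 = n := by
  obtain ⟨m, rfl⟩ := Nat.exists_eq_succ_of_ne_zero hn
  have hinj := (Finset.range m).nodup_map_iff_injOn.mp (Chebyshev.roots_U_real_nodup m)
  rw [chebCritical, Nat.cast_succ, Nat.succ_sub_one, Finset.card_image_of_injOn hinj,
    Finset.card_range]

theorem derivative_T_eq_C_mul_nodal {n : ℕ} (hn : n ≠ 0) :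
    derivative (Chebyshev.T ℝ n) =
      C (n * 2 ^ (n - 1) : ℝ) * Lagrange.nodal (chebCritical n) id := by
  obtain ⟨m, rfl⟩ := Nat.exists_eq_succ_of_ne_zero hn
  have hroots : (Chebyshev.U ℝ m).roots = (chebCritical (m + 1)).val := by
    rw [Chebyshev.roots_U_real, chebCritical, Nat.cast_succ, Nat.add_sub_cancel]
  have hcard : Multiset.card (Chebyshev.U ℝ m).roots = (Chebyshev.U ℝ m).natDegree := by
    rw [hroots, Chebyshev.natDegree_U_natCast]
    exact Nat.succ_injective (card_chebCritical hn)
  have hsplit := C_leadingCoeff_mul_prod_multiset_X_sub_C hcard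
  rw [Chebyshev.leadingCoeff_U_natCast, hroots] at hsplit
  rw [Chebyshev.T_derivative_eq_U, Nat.cast_succ, Int.cast_add, add_sub_cancel_right, ← hsplit]
  simp [Lagrange.nodal, mul_assoc]

theorem chebDeriv_succ_eq_eval_nodal {n : ℕ} (hn : n ≠ 0) (k : ℕ) (t : ℝ) :
    chebDeriv n (k + 1) t =
      n * 2 ^ (n - 1) * (derivative^[k] (Lagrange.nodal (chebCritical n) id)).eval t := by
  rw [chebDeriv, Function.iterate_succ_apply, derivative_T_eq_C_mul_nodal hn,
    iterate_derivative_C_mul, eval_mul, eval_C]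

theorem chebDeriv_zero_mul_two_of_critical {m : ℤ} (hm : m ≠ 0) {z : ℝ} (hz : z ∈ Icc (-1) 1)
    (hz' : chebDeriv m 1 z = 0) : chebDeriv m 0 z * chebDeriv m 2 z = -|chebDeriv m 2 z| := by
  have hm' : (0 : ℝ) < m ^ 2 := by positivity
  have hode := chebDeriv_ode m z
  have hT : chebDeriv m 0 z ^ 2 = 1 := by
    have hpell := chebDeriv_pell m z
    rw [hz', zero_pow two_ne_zero, mul_zero] at hpell
    linarith [(mul_eq_zero.mp hpell.symm).resolve_left hm'.ne']
  rw [hz'] at hode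
  have hprod : (1 - z ^ 2) * (chebDeriv m 0 z * chebDeriv m 2 z) = -m ^ 2 := by
    linear_combination chebDeriv m 0 z * hode - m ^ 2 * hT
  have hz2 : 0 ≤ 1 - z ^ 2 := by nlinarith [hz.1, hz.2]
  have hneg : chebDeriv m 0 z * chebDeriv m 2 z ≤ 0 := by
    by_contra! hpos
    nlinarith
  have habs : |chebDeriv m 0 z| = 1 := (abs_eq zero_le_one).mpr (sq_eq_one_iff.mp hT)
  rw [← neg_eq_iff_eq_neg, ← abs_of_nonpos hneg, abs_mul, habs, one_mul]

theorem chebCritical_subset_Icc (n : ℕ) : (chebCritical n : Set ℝ) ⊆ Icc (-1) 1 := by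
  intro z hz
  obtain ⟨k, -, rfl⟩ := Finset.mem_image.mp hz
  exact Real.cos_mem_Icc _

section Critical

variable {n : ℕ} {z : ℝ}

theorem le_cos_pi_div_of_mem_chebCritical (hz : z ∈ chebCritical n) :
    z ≤ Real.cos (Real.pi / n) := by
  obtain ⟨k, hk, rfl⟩ := Finset.mem_image.mp hz
  have hkn : k + 1 ≤ n := by have := Finset.mem_range.mp hk; lia
  have hkn' : (k + 1 : ℝ) ≤ n := mod_cast hkn
  have hn : (0 : ℝ) < n := by exact_mod_cast k.succ_pos.trans_le hkn
  refine Real.cos_le_cos_of_nonneg_of_le_pi (by positivity) ?_ ?_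
  · rw [div_le_iff₀ hn, mul_comm]
    gcongr
  · gcongr
    exact le_mul_of_one_le_left Real.pi_pos.le (by simp)

theorem chebDeriv_one_of_mem_chebCritical (hz : z ∈ chebCritical n) : chebDeriv n 1 z = 0 := by
  have hn : n ≠ 0 := by rintro rfl; simp [chebCritical] at hz
  have hN : (Lagrange.nodal (chebCritical n) id).eval z = 0 :=
    Lagrange.eval_nodal_at_node (v := id) hz
  rw [chebDeriv_succ_eq_eval_nodal hn, Function.iterate_zero, id, hN, mul_zero]

end Critical

theorem IsDerivChainOn.abs_le_abs_chebDeriv {n : ℕ} (hn : n ≠ 0) {F : ℕ → ℝ → ℝ}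
    (hF : IsDerivChainOn n F (Icc (-1) 1)) (hF₀ : ∀ t ∈ Icc (-1) 1, |F 0 t| ≤ 1)
    (hFn : ∀ t ∈ Icc (-1) 1, |F n t| ≤ sigmaN n) {w : ℝ} (hw : w ∈ Icc (-1) 1)
    (hw₂ : chebDeriv n 2 w = 0) : |F 1 w| ≤ |chebDeriv n 1 w| := by
  have hcard := card_chebCritical hn
  have hc : (0 : ℝ) < n * 2 ^ (n - 1) := by positivity
  have hN' : ∀ t, chebDeriv n 2 t = n * 2 ^ (n - 1) *
      (derivative (Lagrange.nodal (chebCritical n) id)).eval t :=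
    chebDeriv_succ_eq_eval_nodal hn 1
  have hdom : ∀ z ∈ chebCritical n,
      |(derivative (Lagrange.nodal (chebCritical n) id)).eval z * F 0 z| ≤
        -((derivative (Lagrange.nodal (chebCritical n) id)).eval z * chebDeriv n 0 z) := by
    intro z hz
    have hzI := chebCritical_subset_Icc n hz
    have hsign := chebDeriv_zero_mul_two_of_critical (mod_cast hn) hzI
      (chebDeriv_one_of_mem_chebCritical hz)
    rw [hN', abs_mul, abs_of_pos hc] at hsign
    rw [abs_mul]
    refine (mul_le_of_le_one_right (abs_nonneg _) (hF₀ z hzI)).trans_eq ?_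
    exact mul_left_cancel₀ hc.ne' (by linear_combination hsign)
  refine IsDerivChainOn.abs_le_abs_of_dominated (chebCritical_subset_Icc n)
    (by rwa [hcard]) (isDerivChainOn_chebDeriv _ n _) hdom ?_ hw ?_
  · rw [hcard]
    exact fun t ht => (hFn t ht).trans_eq (chebDeriv_self n t).symm
  · exact (mul_eq_zero.mp ((hN' w).symm.trans hw₂)).resolve_left hc.ne'

section InflectionPoint

theorem le_cos_pi_div_of_chebDeriv_two_eq_zero {n : ℕ} (hn : 2 ≤ n) {w : ℝ}
    (hw : chebDeriv n 2 w = 0) : w ≤ Real.cos (Real.pi / n) := by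
  by_contra! hlt
  have hn' : n ≠ 0 := by lia
  have hne : (chebCritical n).Nonempty :=
    Finset.card_pos.mp (by have := card_chebCritical hn'; lia)
  have hpos := eval_derivative_nodal_pos hne fun z hz =>
    (le_cos_pi_div_of_mem_chebCritical hz).trans_lt hlt
  have hc : (0 : ℝ) < n * 2 ^ (n - 1) := by positivity
  exact (mul_pos hc hpos).ne' ((chebDeriv_succ_eq_eval_nodal hn' 1 w).symm.trans hw)

theorem chebDeriv_one_cos (m : ℤ) (θ : ℝ) :
    chebDeriv m 1 (Real.cos θ) * Real.sin θ = m * Real.sin (m * θ) := by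
  have hU := Chebyshev.U_real_cos θ (m - 1)
  rw [Int.cast_sub, Int.cast_one, sub_add_cancel] at hU
  rw [chebDeriv, Function.iterate_one, Chebyshev.T_derivative_eq_U, eval_mul, eval_intCast,
    mul_assoc, hU]

theorem cos_mul_sin_eq_of_chebDeriv_two_eq_zero {m : ℤ} (hm : m ≠ 0) {θ : ℝ}
    (hθ : chebDeriv m 2 (Real.cos θ) = 0) :
    Real.cos θ * Real.sin (m * θ) = m * (Real.sin θ * Real.cos (m * θ)) := by
  have hode := chebDeriv_ode m (Real.cos θ)
  have hT : chebDeriv m 0 (Real.cos θ) = Real.cos (m * θ) := Chebyshev.T_real_cos θ m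
  have hm' : (m : ℝ) ≠ 0 := mod_cast hm
  rw [hθ, mul_zero, hT] at hode
  refine mul_left_cancel₀ hm' ?_
  linear_combination -Real.sin θ * hode - Real.cos θ * chebDeriv_one_cos m θ

theorem mul_cos_le_sin {θ : ℝ} (h₀ : 0 ≤ θ) (h₁ : θ < Real.pi / 2) :
    θ * Real.cos θ ≤ Real.sin θ := by
  have hcos : 0 < Real.cos θ := Real.cos_pos_of_mem_Ioo ⟨by linarith [Real.pi_pos], h₁⟩
  rw [← Real.tan_mul_cos hcos.ne']
  exact mul_le_mul_of_nonneg_right (Real.le_tan h₀ h₁) hcos.le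

theorem four_le_mul_of_cos_mul_sin_eq {a θ : ℝ} (h₀ : 0 < θ) (h₁ : θ < Real.pi / 2)
    (ha : Real.pi ≤ a * θ)
    (heq : Real.cos θ * Real.sin (a * θ) = a * (Real.sin θ * Real.cos (a * θ))) :
    4 ≤ a * θ := by
  by_contra! hlt
  have hπ := Real.pi_gt_three
  have hcosθ : 0 < Real.cos θ := Real.cos_pos_of_mem_Ioo ⟨by linarith, h₁⟩
  have ha₀ : 0 < a := pos_of_mul_pos_left (Real.pi_pos.trans_le ha) h₀.le
  set v := a * θ - Real.pi
  have hsplit : a * θ = v + Real.pi := by ring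
  rw [hsplit, Real.sin_add_pi, Real.cos_add_pi] at heq
  have hcosv : 1 / 2 < Real.cos v := by
    rw [← Real.cos_pi_div_three]
    exact Real.cos_lt_cos_of_nonneg_of_le_pi (by linarith) (by linarith) (by linarith)
  have hsinθ : Real.pi * Real.cos θ ≤ a * Real.sin θ := calc
    Real.pi * Real.cos θ ≤ a * θ * Real.cos θ := by gcongr
    _ = a * (θ * Real.cos θ) := mul_assoc ..
    _ ≤ a * Real.sin θ := by gcongr; exact mul_cos_le_sin h₀.le h₁
  have : Real.cos θ < Real.cos θ := calc
    Real.cos θ < Real.pi * Real.cos θ * (1 / 2) := by nlinarith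
    _ ≤ a * Real.sin θ * Real.cos v :=
      mul_le_mul hsinθ hcosv.le one_half_pos.le
        ((by positivity : 0 ≤ Real.pi * Real.cos θ).trans hsinθ)
    _ = Real.cos θ * Real.sin v := by linear_combination heq
    _ ≤ Real.cos θ := mul_le_of_le_one_right hcosθ.le (Real.sin_le_one v)
  exact this.false

theorem four_mul_one_add_cos_le {a θ : ℝ} (h₀ : 0 < θ) (h₁ : θ < Real.pi) (ha : 4 ≤ a * θ) :
    4 * (1 + Real.cos θ) ≤ a ^ 2 * (1 - Real.cos θ) := by
  have ha₀ : 0 < a := pos_of_mul_pos_left (four_pos.trans_le ha) h₀.le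
  have hcos : 0 < Real.cos (θ / 2) := Real.cos_pos_of_mem_Ioo ⟨by linarith, by linarith⟩
  have hhalf : 2 * Real.cos (θ / 2) ≤ a * Real.sin (θ / 2) := calc
    2 * Real.cos (θ / 2) ≤ a * (θ / 2) * Real.cos (θ / 2) := by gcongr; linarith
    _ = a * (θ / 2 * Real.cos (θ / 2)) := mul_assoc ..
    _ ≤ a * Real.sin (θ / 2) := by
      gcongr
      exact mul_cos_le_sin (by positivity) (by linarith)
  have hsq := pow_le_pow_left₀ (by positivity) hhalf 2
  have hdouble := Real.cos_two_mul (θ / 2)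
  rw [mul_div_cancel₀ θ two_ne_zero] at hdouble
  rw [mul_pow, mul_pow, Real.sin_sq] at hsq
  linear_combination 2 * hsq + (4 + a ^ 2) * hdouble

theorem four_mul_one_add_le_of_chebDeriv_two_eq_zero {n : ℕ} (hn : 3 ≤ n) {w : ℝ} (hw : -1 < w)
    (hw₂ : chebDeriv n 2 w = 0) : 4 * (1 + w) ≤ n ^ 2 * (1 - w) := by
  have hn₀ : (0 : ℝ) < n := by positivity
  have hn₃ : (3 : ℝ) ≤ n := mod_cast hn
  have hπ := Real.pi_gt_three
  have hw_le := le_cos_pi_div_of_chebDeriv_two_eq_zero (by lia) hw₂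
  have hw₁ : w ≤ 1 := hw_le.trans (Real.cos_le_one _)
  have hcos : Real.cos (Real.arccos w) = w := Real.cos_arccos hw.le hw₁
  set θ := Real.arccos w
  have hθ : Real.pi / n ≤ θ := by
    rw [← Real.arccos_cos (x := Real.pi / n) (by positivity)
      (div_le_self Real.pi_pos.le (by linarith))]
    exact Real.arccos_le_arccos hw_le
  have hθ₀ : 0 < θ := (by positivity : 0 < Real.pi / n).trans_le hθ
  have hθ₁ : θ < Real.pi := (Real.arccos_le_pi w).lt_of_ne (mt Real.arccos_eq_pi.mp hw.not_ge)
  have hnθ : 4 ≤ n * θ := by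
    rcases lt_or_ge θ (Real.pi / 2) with hlt | hge
    · refine four_le_mul_of_cos_mul_sin_eq hθ₀ hlt ((div_le_iff₀' hn₀).mp hθ) ?_
      exact cos_mul_sin_eq_of_chebDeriv_two_eq_zero (mod_cast hn₀.ne') (hcos.symm ▸ hw₂)
    · nlinarith
  rw [← hcos]
  exact four_mul_one_add_cos_le hθ₀ hθ₁ hnθ

theorem one_add_mul_abs_chebDeriv_one_le {n : ℕ} (hn : 3 ≤ n) {w : ℝ} (hw : -1 < w)
    (hw₂ : chebDeriv n 2 w = 0) : (1 + w) * |chebDeriv n 1 w| ≤ n ^ 2 / 2 := by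
  have hode := chebDeriv_ode n w
  have hpell := chebDeriv_pell n w
  rw [hw₂, mul_zero] at hode
  push_cast at hode hpell
  have hderiv : (n ^ 2 * (1 - w ^ 2) + w ^ 2) * chebDeriv n 1 w ^ 2 = (n ^ 2) ^ 2 := by
    linear_combination n ^ 2 * hpell -
      (w * chebDeriv n 1 w + n ^ 2 * chebDeriv n 0 w) * hode
  have hw₀ : 0 < 1 + w := by linarith
  have hfour : (2 * (1 + w)) ^ 2 ≤ n ^ 2 * (1 - w ^ 2) + w ^ 2 := by
    have := mul_le_mul_of_nonneg_left
      (four_mul_one_add_le_of_chebDeriv_two_eq_zero hn hw hw₂) hw₀.le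
    linarith [sq_nonneg w]
  have hsq : (2 * (1 + w) * chebDeriv n 1 w) ^ 2 ≤ (n ^ 2) ^ 2 := by
    rw [← hderiv, mul_pow]
    gcongr
  have habs := abs_le_of_sq_le_sq hsq (by positivity)
  rw [abs_mul, abs_of_pos (by positivity : 0 < 2 * (1 + w))] at habs
  linarith

end InflectionPoint

theorem IsDerivChainOn.one_add_mul_abs_le {n : ℕ} (hn : n ≠ 0) {F : ℕ → ℝ → ℝ}
    (hF : IsDerivChainOn n F (Icc (-1) 1)) (hF₀ : ∀ t ∈ Icc (-1) 1, |F 0 t| ≤ 1)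
    (hFn : ∀ t ∈ Icc (-1) 1, |F n t| ≤ sigmaN n) {w : ℝ} (hw : w ≤ 1)
    (hw₂ : chebDeriv n 2 w = 0) {x : ℝ} (hx : x ∈ Ioc (-1) w) :
    (1 + x) * |F 1 x| ≤ (1 + w) * |chebDeriv n 1 w| := by
  have hx₀ : 0 < 1 + x := by linarith [hx.1]
  have hw₀ : 0 < 1 + w := by linarith [hx.2]
  set q := (1 + x) / (1 + w) with hq
  have hq₀ : 0 < q := by positivity
  have hq₁ : q ≤ 1 := (div_le_one hw₀).mpr (by linarith [hx.2])
  have hmaps : MapsTo (fun t => q * t + (q - 1)) (Icc (-1) 1) (Icc (-1) 1) := fun t ht =>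
    ⟨by nlinarith [ht.1], by nlinarith [ht.2]⟩
  have hqw : q * w + (q - 1) = x := by
    rw [hq]
    field_simp
    ring
  have hbound := (hF.comp_affine hmaps).abs_le_abs_chebDeriv hn
    (fun t ht => by simpa only [pow_zero, one_mul] using hF₀ _ (hmaps ht))
    (fun t ht => by
      rw [abs_mul, abs_of_pos (pow_pos hq₀ n)]
      exact (mul_le_of_le_one_left (abs_nonneg _) (pow_le_one₀ hq₀.le hq₁)).trans
        (hFn _ (hmaps ht))) ⟨by linarith, hw⟩ hw₂
  rw [hqw, pow_one, abs_mul, abs_of_pos hq₀] at hbound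
  calc (1 + x) * |F 1 x| = (1 + w) * (q * |F 1 x|) := by rw [hq]; field_simp
    _ ≤ (1 + w) * |chebDeriv n 1 w| := by gcongr

theorem NTimesDiffOn.isDerivChainOn {n : ℕ} {f : ℝ → ℝ} {s : Set ℝ} (hf : NTimesDiffOn n f s) :
    IsDerivChainOn n (fun i => iteratedDerivWithin i f s) s := fun i hi t ht => by
  simpa only [iteratedDerivWithin_succ] using (hf i hi t ht).hasDerivWithinAt

theorem memW.one_add_mul_abs_iteratedDerivWithin_one_le {n : ℕ} (hn : 3 ≤ n) {f : ℝ → ℝ}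
    (hf : memW n (sigmaN n) f) {w : ℝ} (hw : chebDeriv n 2 w = 0) {x : ℝ} (hx : x ∈ Ioc (-1) w) :
    (1 + x) * |iteratedDerivWithin 1 f (Icc (-1) 1) x| ≤ 1 / 2 * chebDeriv n 1 1 := by
  have hw₀ : -1 < w := hx.1.trans_le hx.2
  have hw₁ : w ≤ 1 :=
    (le_cos_pi_div_of_chebDeriv_two_eq_zero (by lia) hw).trans (Real.cos_le_one _)
  rw [chebDeriv_one_one, Int.cast_natCast, one_div_mul_eq_div]
  refine (hf.1.isDerivChainOn.one_add_mul_abs_le (by lia) (fun t ht => ?_) hf.2.2 hw₁ hw hx).trans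
    (one_add_mul_abs_chebDeriv_one_le hn hw₀ hw)
  simpa only [iteratedDerivWithin_zero] using hf.2.1 t ht

theorem m1_upper_bound_general {n : ℕ} (hn : 3 ≤ n) {w : ℝ} (hw : chebDeriv n 2 w = 0) {x : ℝ}
    (hx : x ∈ Ioc (-1) w) :
    mval n 1 x (sigmaN n) ≤ 1 / 2 * chebDeriv n 1 1 / (1 + x) ∧
      ∀ f : ℝ → ℝ, memW n (sigmaN n) f →
        |iteratedDerivWithin 1 f (Icc (-1:ℝ) 1) x| ≤ 1 / 2 * chebDeriv n 1 1 / (1 + x) := by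
  have hx₀ : 0 < 1 + x := by linarith [hx.1]
  have hbound : ∀ f : ℝ → ℝ, memW n (sigmaN n) f →
      |iteratedDerivWithin 1 f (Icc (-1:ℝ) 1) x| ≤ 1 / 2 * chebDeriv n 1 1 / (1 + x) := by
    intro f hf
    rw [le_div_iff₀' hx₀]
    exact hf.one_add_mul_abs_iteratedDerivWithin_one_le hn hw hx
  refine ⟨Real.sSup_le ?_ ?_, hbound⟩
  · rintro _ ⟨f, hf, rfl⟩
    exact hbound f hf
  · rw [chebDeriv_one_one]
    positivity

/-- `m_1(x,σ_n) ≤ (1/2)·T_n'(1)` on `[0, ω₁]` for `n ≥ 4`. -/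
theorem m1_upper_bound (n : ℕ) (hn : 4 ≤ n) (ω₁ : ℝ)
    (hω : IsGreatest {x : ℝ | chebDeriv n 2 x = 0} ω₁) :
    ∀ x ∈ Icc (0:ℝ) ω₁,
      mval n 1 x (sigmaN n) ≤ (1 / 2) * chebDeriv n 1 1 ∧
      ∀ f : ℝ → ℝ, NTimesDiffOn n f (Icc (-1:ℝ) 1) →
        (∀ t ∈ Icc (-1:ℝ) 1, |f t| ≤ 1) →
        (∀ t ∈ Icc (-1:ℝ) 1, |iteratedDerivWithin n f (Icc (-1:ℝ) 1) t| ≤ sigmaN n) →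
        |iteratedDerivWithin 1 f (Icc (-1:ℝ) 1) x| ≤ (1 / 2) * chebDeriv n 1 1 := by
  intro x hx
  have hx₀ : (-1 : ℝ) < x := by linarith [hx.1]
  have hle : 1 / 2 * chebDeriv n 1 1 / (1 + x) ≤ 1 / 2 * chebDeriv n 1 1 :=
    div_le_self (by rw [chebDeriv_one_one]; positivity) (by linarith [hx.1])
  obtain ⟨hmval, hbound⟩ := m1_upper_bound_general (by lia) hω.1 ⟨hx₀, hx.2⟩
  exact ⟨hmval.trans hle, fun f hf hf₀ hfn => (hbound f ⟨hf, hf₀, hfn⟩).trans hle⟩
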